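/- Let n ≥ 3, m₁ ≥ 0, m₂ ≥ 1, λ = (0, m₂, …, m₂, m₁+m₂) and λ⁺ = (0, m₂+1, …, m₂+1, m₁+m₂+1). Then for every 2 ≤ j ≤ n−1 and every k ∈ ℤ_{≥0}^n: c^{λ⁺}_{j|1}(k_1+1, …, k_{j−1}+1, k_j, k_{j+1}+1, …, k_n+1) = c^{λ⁺}_{j+1|1}(k_1+1, …, k_j+1, k_{j+1}, k_{j+2}+1, …, k_n+1) − (1 − q^{m₂}) · c^{λ}_{j+1|1}(k_1,…,k_n). -/

import Mathlib

open Finset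

namespace CO

/-- The column diagram `dg'(λ)` of a composition, as a finset of boxes `(i, j)`,
`1 ≤ i ≤ n`, `1 ≤ j ≤ λ_i`. -/
def dgF (n : ℕ) (lam : ℕ → ℕ) : Finset (ℕ × ℕ) :=
  (Finset.Icc 1 n).biUnion fun i => (Finset.Icc 1 (lam i)).image fun j => (i, j)

/-- The augmented diagram `d̂g(λ)`: one extra box `(i, 0)` below each column. -/
def augF (n : ℕ) (lam : ℕ → ℕ) : Finset (ℕ × ℕ) :=
  dgF n lam ∪ (Finset.Icc 1 n).image fun i => (i, 0)

/-- The box `d(u)` directly below a box. -/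
def dbox (u : ℕ × ℕ) : ℕ × ℕ := (u.1, u.2 - 1)

/-- The augmented filling `σ̂`: equal to `σ` on positive rows and to `i` on `(i, 0)`. -/
def aug (σ : ℕ × ℕ → ℕ) (u : ℕ × ℕ) : ℕ := if u.2 = 0 then u.1 else σ u

/-- A filling takes values in `{1, …, n}` on the diagram. -/
def IsFilling (n : ℕ) (lam : ℕ → ℕ) (σ : ℕ × ℕ → ℕ) : Prop :=
  ∀ u ∈ dgF n lam, 1 ≤ σ u ∧ σ u ≤ n

/-- Attacking boxes: same row, or consecutive rows with the lower box to the right. -/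
def Attack (u v : ℕ × ℕ) : Prop :=
  u ≠ v ∧ (u.2 = v.2 ∨ (u.2 = v.2 + 1 ∧ u.1 < v.1) ∨ (v.2 = u.2 + 1 ∧ v.1 < u.1))

/-- A non-attacking filling: `σ̂` takes distinct values on attacking pairs of the
augmented diagram. -/
def NonAttacking (n : ℕ) (lam : ℕ → ℕ) (σ : ℕ × ℕ → ℕ) : Prop :=
  ∀ u ∈ augF n lam, ∀ v ∈ augF n lam, Attack u v → aug σ u ≠ aug σ v

/-- The arm of a box `u`. -/
def armF (n : ℕ) (lam : ℕ → ℕ) (u : ℕ × ℕ) : Finset (ℕ × ℕ) :=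
  ((dgF n lam).filter fun v => v.1 < u.1 ∧ v.2 = u.2 ∧ lam v.1 ≤ lam u.1) ∪
    ((augF n lam).filter fun v => u.1 < v.1 ∧ v.2 + 1 = u.2 ∧ lam v.1 < lam u.1)

/-- `a(u) = |arm(u)|`. -/
def armCard (n : ℕ) (lam : ℕ → ℕ) (u : ℕ × ℕ) : ℕ := (armF n lam u).card

/-- The number of inversions of `σ̂`: attacking pairs `u, u'` with `σ̂(u) < σ̂(u')`
and (same row with `u` to the left, or `u'` one row above `u` strictly to the left). -/
def invCard (n : ℕ) (lam : ℕ → ℕ) (σ : ℕ × ℕ → ℕ) : ℕ :=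
  ((augF n lam ×ˢ augF n lam).filter fun p =>
    aug σ p.1 < aug σ p.2 ∧
      ((p.1.2 = p.2.2 ∧ p.1.1 < p.2.1) ∨ (p.2.2 = p.1.2 + 1 ∧ p.2.1 < p.1.1))).card

/-- The descent set of `σ̂`. -/
def desF (n : ℕ) (lam : ℕ → ℕ) (σ : ℕ × ℕ → ℕ) : Finset (ℕ × ℕ) :=
  (dgF n lam).filter fun u => aug σ (dbox u) < aug σ u

/-- The statistic `coinv(σ̂)` (as an integer). -/
def coinv (n : ℕ) (lam : ℕ → ℕ) (σ : ℕ × ℕ → ℕ) : ℤ :=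
  (∑ u ∈ dgF n lam, (armCard n lam u : ℤ)) - invCard n lam σ +
    (((Finset.Icc 1 n ×ˢ Finset.Icc 1 n).filter fun p =>
      p.1 < p.2 ∧ lam p.1 ≤ lam p.2).card : ℤ) +
    ∑ u ∈ desF n lam σ, (armCard n lam u : ℤ)

/-- The statistic `T(σ)`. -/
def Tstat (n : ℕ) (lam : ℕ → ℕ) (σ : ℕ × ℕ → ℕ) : ℤ :=
  coinv n lam σ -
    ∑ u ∈ (dgF n lam).filter fun u => aug σ u ≠ aug σ (dbox u), (armCard n lam u : ℤ)

/-- Antidominant composition: `λ_1 ≤ ⋯ ≤ λ_n`. -/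
def Antidominant (n : ℕ) (lam : ℕ → ℕ) : Prop :=
  ∀ i j, 1 ≤ i → i ≤ j → j ≤ n → lam i ≤ lam j

/-- Appropriate filling: non-attacking with `T(σ) = 0`. -/
def Appropriate (n : ℕ) (lam : ℕ → ℕ) (σ : ℕ × ℕ → ℕ) : Prop :=
  IsFilling n lam σ ∧ NonAttacking n lam σ ∧ Tstat n lam σ = 0

/-- The operation `π` on compositions: `π(λ) = (λ_n + 1, λ_1, …, λ_{n-1})`. -/
def piComp (n : ℕ) (lam : ℕ → ℕ) : ℕ → ℕ :=
  fun i => if i = 1 then lam n + 1 else lam (i - 1)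

/-- The operation `π` on boxes. -/
def piBox (n : ℕ) (u : ℕ × ℕ) : ℕ × ℕ :=
  if u.1 < n then (u.1 + 1, u.2) else (1, u.2 + 1)

/-- Extension by zero of a function defined on the diagram. -/
def ext (n : ℕ) (lam : ℕ → ℕ) (f : {u // u ∈ dgF n lam} → ℕ) : ℕ × ℕ → ℕ :=
  fun u => if h : u ∈ dgF n lam then f ⟨u, h⟩ else 0

/-- `qstat(σ) = Σ (l(u) + 1)` over boxes `u` with `σ̂(u) < σ̂(d(u))`. -/
def qstat (n : ℕ) (lam : ℕ → ℕ) (σ : ℕ × ℕ → ℕ) : ℕ :=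
  ∑ u ∈ (dgF n lam).filter fun u => aug σ u < aug σ (dbox u), (lam u.1 - u.2 + 1)

end CO

namespace CO

/-- The statistic `asc(τ) = Σ (l(u) + 1)` over boxes `u = (i, j)` with `j ≥ 2` and
`τ(u) < τ(d(u))`. -/
def ascStat (n : ℕ) (mu : ℕ → ℕ) (τ : ℕ × ℕ → ℕ) : ℕ :=
  ∑ u ∈ (dgF n mu).filter fun u => 2 ≤ u.2 ∧ τ u < τ (dbox u), (mu u.1 - u.2 + 1)

/-- The greedy rule (iii): for boxes in rows `≥ 2`, with `S = τ(arm(u)) ∪ {τ(u)}`,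
`τ(u)` is the minimum of `{x ∈ S : x ≥ τ(d(u))}` if nonempty, and `min S` otherwise. -/
def GreedyRule (n : ℕ) (mu : ℕ → ℕ) (τ : ℕ × ℕ → ℕ) : Prop :=
  ∀ u ∈ dgF n mu, 2 ≤ u.2 →
    (({x ∈ τ '' ↑(armF n mu u) ∪ {τ u} | τ (dbox u) ≤ x}.Nonempty →
        τ u = sInf {x ∈ τ '' ↑(armF n mu u) ∪ {τ u} | τ (dbox u) ≤ x}) ∧
      (¬ {x ∈ τ '' ↑(armF n mu u) ∪ {τ u} | τ (dbox u) ≤ x}.Nonempty →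
        τ u = sInf (τ '' ↑(armF n mu u) ∪ {τ u})))

/-- Conditions (i)–(iv) on the fillings `τ` counted by `c_a^μ(k)`. -/
def CCond (n : ℕ) (mu : ℕ → ℕ) (a : ℕ → ℕ) (k : ℕ → ℕ) (τ : ℕ × ℕ → ℕ) : Prop :=
  (∀ u ∈ dgF n mu, 1 ≤ τ u ∧ τ u ≤ n) ∧
    (∀ j, (j, 1) ∈ dgF n mu → τ (j, 1) = a j) ∧
    (∀ u ∈ dgF n mu, ∀ v ∈ dgF n mu, Attack u v → τ u ≠ τ v) ∧
    GreedyRule n mu τ ∧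
    ∀ i, 1 ≤ i → i ≤ n → ((dgF n mu).filter fun u => τ u = i).card = k i

open Classical in
/-- The coefficient `c_a^μ(k) ∈ ℤ[q]`: the generating function `Σ_τ q^{asc(τ)}`
over fillings satisfying (i)–(iv). -/
noncomputable def cCoef (n : ℕ) (mu : ℕ → ℕ) (a : ℕ → ℕ) (k : ℕ → ℕ) : Polynomial ℤ :=
  ∑ f ∈ (Fintype.piFinset fun _ : {u // u ∈ dgF n mu} => Finset.Icc 1 n).filter
      fun f => CCond n mu a k (ext n mu f),
    Polynomial.X ^ ascStat n mu (ext n mu f)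

end CO

namespace CO

/-- The bottom-row tuple defining `c^μ_{ã|b}` (for `s = n - 1`): entry `b` at
position `n`, and the elements of `{1, …, n} ∖ {ã, b}` in decreasing order at
positions `2, …, n - 1`. -/
def aTuple (n atil b : ℕ) : ℕ → ℕ :=
  fun j => if j = n then b
    else ((((Finset.Icc 1 n).erase atil).erase b).sort (· ≤ ·)).getD (n - 1 - j) 0

/-- The coefficient `c^μ_{ã|b}(k)`. -/
noncomputable def cBar (n : ℕ) (mu : ℕ → ℕ) (atil b : ℕ) (k : ℕ → ℕ) : Polynomial ℤ :=
  cCoef n mu (aTuple n atil b) k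

end CO

/-!
The fillings are cut into rows, so the generating function is computed by a transfer matrix: one
factor for each pair of consecutive rows. The greedy rule says that the label of a box is the first
one met among itself and the labels to its left when walking cyclically upwards from the label
below. This gives a local exchange identity for two adjacent columns of equal height, which makes
the generating function symmetric in the entries of its bottom row in columns `2, …, n - 1`.

The bottom row for the missing label `j` arises from the one for `j + 1` by raising the entry `j` to
`j + 1`, and by symmetry this entry may be assumed to stand in column `2`. Raising it creates an
ascent only below the label `j`. As `j + 1` is missing, the greedy rule then forces the second row
to repeat the bottom row, so only that one transition changes its weight, from `1` to `q ^ m₂`.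
-/

namespace CO

open Polynomial

section SwapUpdate

lemma image_comp_swap {α β : Type*} [DecidableEq α] {x y : α} {S : Set α} (f : α → β)
    (hS : x ∈ S ↔ y ∈ S) : (f ∘ Equiv.swap x y) '' S = f '' S := by
  rw [Set.image_comp, (Equiv.swap_bijOn_self hS).image_eq]

lemma injOn_comp_swap_iff {α β : Type*} [DecidableEq α] {x y : α} {S : Set α} {f : α → β}
    (hS : x ∈ S ↔ y ∈ S) : Set.InjOn (f ∘ Equiv.swap x y) S ↔ Set.InjOn f S := by
  rw [(Equiv.swap_bijOn_self hS).injOn.comp_iff, (Equiv.swap_bijOn_self hS).image_eq]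

lemma swap_apply_mem_iff {α : Type*} [DecidableEq α] {x y : α} {S : Set α} (hS : x ∈ S ↔ y ∈ S)
    (u : α) : Equiv.swap x y u ∈ S ↔ u ∈ S := by
  rw [Equiv.swap_apply_def]
  split_ifs with hx hy
  · rw [hx, hS]
  · rw [hy, hS]
  · rfl

lemma image_update_of_notMem {α β : Type*} [DecidableEq α] {f : α → β} {x : α} {y : β} {S : Set α}
    (hx : x ∉ S) : Function.update f x y '' S = f '' S :=
  Set.image_congr fun _ hz => Function.update_of_ne (ne_of_mem_of_not_mem hz hx) ..

lemma sum_mul_eq_sum_mul_of_add_comp {ι R : Type*} [CommRing R] [IsDomain R] [CharZero R]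
    {s : Finset ι} (e : Equiv.Perm ι) (he : ∀ c, e c ∈ s ↔ c ∈ s) {f g S : ι → R}
    (hS : ∀ c ∈ s, S (e c) = S c) (hfg : ∀ c ∈ s, f c + f (e c) = g c + g (e c)) :
    ∑ c ∈ s, f c * S c = ∑ c ∈ s, g c * S c := by
  have hdouble : ∀ h : ι → R, ∑ c ∈ s, (h c + h (e c)) * S c = 2 * ∑ c ∈ s, h c * S c := by
    intro h
    have hcomp : ∑ c ∈ s, h (e c) * S c = ∑ c ∈ s, h c * S c :=
      sum_equiv e (fun c => (he c).symm) fun c hc => by rw [hS c hc]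
    simp only [add_mul, sum_add_distrib, hcomp, two_mul]
  refine mul_left_cancel₀ (two_ne_zero (α := R)) ?_
  rw [← hdouble, ← hdouble]
  exact sum_congr rfl fun c hc => by rw [hfg c hc]

end SwapUpdate

section Arc

variable {α : Type*} [LinearOrder α]

/-- The cyclic half-open interval `[d, y)`: the labels met when walking upwards from `d`, wrapping
around past the largest label, before reaching `y`. In particular `arc d d = ∅`. -/
def arc (d y : α) : Set α := if d ≤ y then Set.Ico d y else Set.Ici d ∪ Set.Iio y

lemma arc_self (x : α) : arc x x = ∅ := by simp [arc]

lemma mem_arc_succ {d j : ℕ} (hd : d ≠ j + 1) : j ∈ arc d (j + 1) := by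
  unfold arc
  split_ifs <;> simp only [Set.mem_Ico, Set.mem_union, Set.mem_Ici, Set.mem_Iio] <;> omega

lemma mem_arc_iff_notMem_arc {x h : α} (hne : x ≠ h) (y : α) : x ∈ arc y h ↔ h ∉ arc y x := by
  unfold arc
  split_ifs <;> simp only [Set.mem_Ico, Set.mem_union, Set.mem_Ici, Set.mem_Iio] <;> grind

lemma arc_union_arc {x y h : α} (hx : x ∈ arc y h) : arc y x ∪ arc x h = arc y h := by
  unfold arc at *
  ext z
  split_ifs at * <;> simp only [Set.mem_Ico, Set.mem_union, Set.mem_Ici, Set.mem_Iio] at * <;> grind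

/-- The weight of stacking the label `u` on top of the label `x`: it is `W` at an ascent, that is
if `u < x`. -/
def ascWeight {R : Type*} [One R] (W : R) (x u : α) : R := if u < x then W else 1

lemma ascWeight_self {R : Type*} [One R] (W : R) (x : α) : ascWeight W x x = 1 := by
  simp [ascWeight]

lemma ascWeight_mul_ascWeight {R : Type*} [MulOneClass R] {x y h : α} (hx : x ∈ arc y h) (W : R) :
    ascWeight W y x * ascWeight W x h = ascWeight W y h := by
  unfold arc at hx
  unfold ascWeight
  split_ifs at * <;> simp only [Set.mem_Ico, Set.mem_union, Set.mem_Ici, Set.mem_Iio] at * <;>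
    grind [one_mul, mul_one]

end Arc

section Exchange

variable {α R : Type*} [LinearOrder α] [CommSemiring R]

open Classical in
/-- The contribution of a box with label `u` above a box with label `x` to the generating function:
`P` holds the labels to the left of `u` in its own row, `Q` those to the right of `x` in the row
below, and `W` is the weight of an ascent. It vanishes unless the non-attacking condition `u ∉ Q`
and the greedy rule hold. -/
noncomputable def stepWeight (P Q : Set α) (W : R) (x u : α) : R :=
  if u ∉ Q ∧ Disjoint P (arc x u) then ascWeight W x u else 0

variable {P Q : Set α} {x y u v z : α}

lemma stepWeight_self (W : R) (hx : x ∉ Q) : stepWeight P Q W x x = 1 := by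
  rw [stepWeight, if_pos (by simp [hx, arc_self]), ascWeight_self]

lemma stepWeight_eq_zero_of_mem (W : R) (hu : u ∈ Q) : stepWeight P Q W x u = 0 :=
  if_neg fun h => h.1 hu

lemma stepWeight_insert_left_of_mem (W : R) (hz : z ∈ arc x u) :
    stepWeight (insert z P) Q W x u = 0 :=
  if_neg fun h => Set.disjoint_left.1 h.2 (Set.mem_insert z P) hz

lemma stepWeight_insert_left_of_notMem (W : R) (hz : z ∉ arc x u) :
    stepWeight (insert z P) Q W x u = stepWeight P Q W x u := by
  classical
  rw [stepWeight, stepWeight]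
  exact if_congr (by simp only [Set.disjoint_insert_left, hz, not_false_eq_true, true_and]) rfl rfl

lemma stepWeight_insert_right (W : R) (hu : u ≠ z) :
    stepWeight P (insert z Q) W x u = stepWeight P Q W x u := by
  rw [stepWeight, stepWeight]
  congr! 3
  simp only [Set.mem_insert_iff, hu, false_or]

lemma stepWeight_mul_stepWeight (W : R) (hx : x ∈ arc y v) (hxQ : x ∉ Q) :
    stepWeight P Q W y x * stepWeight P Q W x v = stepWeight P Q W y v := by
  classical
  rw [stepWeight, stepWeight, stepWeight, ite_zero_mul_ite_zero, ascWeight_mul_ascWeight hx]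
  refine if_congr ?_ rfl rfl
  rw [← arc_union_arc hx, Set.disjoint_union_right]
  tauto

/-- The joint contribution of two adjacent columns with labels `u`, `v` above `x`, `y`. -/
noncomputable def pairWeight (P Q : Set α) (W : R) (x y u v : α) : R :=
  stepWeight P (insert y Q) W x u * stepWeight (insert u P) Q W y v

lemma pairWeight_eq_zero (W : R) (h : u ∈ Q ∨ v ∈ Q) : pairWeight P Q W x y u v = 0 := by
  rcases h with h | h
  · rw [pairWeight, stepWeight_eq_zero_of_mem W (Set.mem_insert_of_mem y h), zero_mul]
  · rw [pairWeight, stepWeight_eq_zero_of_mem W h, mul_zero]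

lemma pairWeight_exchange_of_eq (W : R) (hxy : x ≠ y) (hxv : x ≠ v) (hx : x ∉ Q) :
    pairWeight P Q W x y x v + pairWeight P Q W x y v x =
      pairWeight P Q W y x x v + pairWeight P Q W y x v x := by
  simp only [pairWeight, stepWeight_insert_right W hxy, stepWeight_insert_right W hxv.symm,
    stepWeight_self W hx, stepWeight_eq_zero_of_mem W (Set.mem_insert x Q), zero_mul, zero_add,
    one_mul, mul_one]
  by_cases hxa : x ∈ arc y v
  · have hva := (mem_arc_iff_notMem_arc hxv y).1 hxa
    have hvy : v ≠ y := by rintro rfl; simp [arc_self] at hxa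
    rw [stepWeight_insert_left_of_mem W hxa, stepWeight_insert_left_of_notMem W hva,
      stepWeight_insert_right W hvy, zero_add, mul_comm, stepWeight_mul_stepWeight W hxa hx]
  · have hva : v ∈ arc y x := by simpa [mem_arc_iff_notMem_arc hxv] using hxa
    rw [stepWeight_insert_left_of_notMem W hxa, stepWeight_insert_left_of_mem W hva, mul_zero,
      add_zero]

lemma pairWeight_exchange (W : R) (hxy : x ≠ y) (huv : u ≠ v)
    (h : u ∈ insert x (insert y Q) ∨ v ∈ insert x (insert y Q)) :
    pairWeight P Q W x y u v + pairWeight P Q W x y v u =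
      pairWeight P Q W y x u v + pairWeight P Q W y x v u := by
  by_cases huvQ : u ∈ Q ∨ v ∈ Q
  · simp only [pairWeight_eq_zero W huvQ, pairWeight_eq_zero W huvQ.symm]
  obtain ⟨hu, hv⟩ := not_or.1 huvQ
  obtain (rfl | rfl) | (rfl | rfl) : (u = x ∨ u = y) ∨ v = x ∨ v = y := by
    simpa [hu, hv] using h
  · exact pairWeight_exchange_of_eq W hxy huv hu
  · exact (pairWeight_exchange_of_eq W hxy.symm huv hu).symm
  · simpa only [add_comm] using pairWeight_exchange_of_eq W hxy huv.symm hv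
  · simpa only [add_comm] using (pairWeight_exchange_of_eq W hxy.symm huv.symm hv).symm

end Exchange

section Stack

/-- The composition `(0, m, …, m, p + m)` with `n` parts. -/
def shape (n p m : ℕ) : ℕ → ℕ := fun i => if i = n then p + m else if 2 ≤ i then m else 0

/-- Row `r` of a filling, as a function of the column. -/
def row (τ : ℕ × ℕ → ℕ) (r : ℕ) : ℕ → ℕ := fun i => τ (i, r)

/-- The row `c` may be stacked on top of the row `a`: columns `2, …, n` satisfy the non-attacking
condition between the two rows, and the greedy rule in the upper one. -/
def RowStep (n : ℕ) (a c : ℕ → ℕ) : Prop :=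
  ∀ i ∈ Set.Icc 2 n, c i ∉ a '' Set.Ioc i n ∧ Disjoint (c '' Set.Ico 2 i) (arc (a i) (c i))

/-- The rows `1, …, m` of `τ` are injective and each may be stacked on the one below. For fillings
of `shape n p m` this is the conjunction of conditions (ii) and (iii); the boxes of column `n` above
row `m` are unconstrained. -/
def IsStack (n m : ℕ) (τ : ℕ × ℕ → ℕ) : Prop :=
  (∀ r ∈ Set.Icc 1 m, Set.InjOn (row τ r) (Set.Icc 2 n)) ∧
    ∀ r ∈ Set.Ico 1 m, RowStep n (row τ r) (row τ (r + 1))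

lemma eq_sInf_iff_of_mem {T : Set ℕ} {y : ℕ} (hy : y ∈ T) : y = sInf T ↔ ∀ z ∈ T, y ≤ z :=
  ⟨fun h _ hz => h.trans_le (Nat.sInf_le hz),
    fun h => le_antisymm (le_csInf ⟨y, hy⟩ h) (Nat.sInf_le hy)⟩

lemma greedy_iff_disjoint_arc (S : Set ℕ) (d y : ℕ) :
    (({x ∈ S ∪ {y} | d ≤ x}.Nonempty → y = sInf {x ∈ S ∪ {y} | d ≤ x}) ∧
      (¬{x ∈ S ∪ {y} | d ≤ x}.Nonempty → y = sInf (S ∪ {y}))) ↔ Disjoint S (arc d y) := by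
  rw [eq_sInf_iff_of_mem (T := S ∪ {y}) (by simp), Set.disjoint_left, arc]
  by_cases hdy : d ≤ y
  · have hy : y ∈ {x ∈ S ∪ {y} | d ≤ x} := ⟨by simp, hdy⟩
    rw [eq_sInf_iff_of_mem hy, if_pos hdy]
    have hne : {x ∈ S ∪ {y} | d ≤ x}.Nonempty := ⟨y, hy⟩
    simp only [Set.mem_ofPred_eq, Set.mem_union, Set.mem_singleton_iff, Set.mem_Ico]
    grind
  · have hempty : ({x ∈ S ∪ {y} | d ≤ x}.Nonempty → y = sInf {x ∈ S ∪ {y} | d ≤ x}) ↔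
        ¬{x ∈ S ∪ {y} | d ≤ x}.Nonempty :=
      ⟨fun h hne => hdy ((h hne).symm ▸ (Nat.sInf_mem hne).2), fun h hne => absurd hne h⟩
    rw [hempty, if_neg hdy, Set.not_nonempty_iff_eq_empty, Set.eq_empty_iff_forall_notMem]
    simp only [Set.mem_ofPred_eq, Set.mem_union, Set.mem_singleton_iff, Set.mem_Ici, Set.mem_Iio]
    grind

variable {n p m i r : ℕ}

lemma mem_dgF {lam : ℕ → ℕ} : (i, r) ∈ dgF n lam ↔ i ∈ Set.Icc 1 n ∧ r ∈ Set.Icc 1 (lam i) := by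
  simp [dgF]

lemma mem_dgF_shape (hn : 2 ≤ n) :
    (i, r) ∈ dgF n (shape n p m) ↔ i ∈ Set.Icc 2 n ∧ r ∈ Set.Icc 1 (shape n p m i) := by
  simp only [mem_dgF, shape, Set.mem_Icc]
  grind

lemma armF_shape (hi : i ∈ Set.Icc 2 n) (hr : 1 ≤ r) :
    armF n (shape n p m) (i, r) = if r ≤ m then Ico 2 i ×ˢ {r} else ∅ := by
  ext ⟨i', r'⟩
  have hn := hi.1.trans hi.2
  simp only [armF, augF, mem_union, mem_filter, mem_dgF_shape hn, mem_image, mem_Icc, shape,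
    Set.mem_Icc] at hi ⊢
  grind

lemma image_row (τ : ℕ × ℕ → ℕ) (i r : ℕ) :
    τ '' ↑(Ico 2 i ×ˢ ({r} : Finset ℕ)) = row τ r '' Set.Ico 2 i := by
  ext x
  simp [row]

/-- Above row `m` only the last column is left, so the arms there are empty. -/
lemma greedyRule_shape_iff (hn : 2 ≤ n) (τ : ℕ × ℕ → ℕ) :
    GreedyRule n (shape n p m) τ ↔ ∀ r ∈ Set.Ico 1 m, ∀ i ∈ Set.Icc 2 n,
      Disjoint (row τ (r + 1) '' Set.Ico 2 i) (arc (row τ r i) (row τ (r + 1) i)) := by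
  simp only [GreedyRule, greedy_iff_disjoint_arc]
  constructor
  · intro h r hr i hi
    have hbox : (i, r + 1) ∈ dgF n (shape n p m) := by
      simp only [mem_dgF_shape hn, shape, Set.mem_Icc, Set.mem_Ico] at *
      grind
    have harc := h _ hbox (by simpa using hr.1)
    rw [armF_shape hi (by simp), if_pos (Nat.succ_le_of_lt hr.2)] at harc
    exact image_row τ i (r + 1) ▸ harc
  · rintro h ⟨i, r⟩ hbox hr
    obtain ⟨hi, hri⟩ := (mem_dgF_shape hn).1 hbox
    obtain ⟨r, rfl⟩ := Nat.exists_eq_add_of_le' (show 1 ≤ r from hri.1)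
    rw [armF_shape hi hri.1]
    split_ifs with hrm
    · exact image_row τ i (r + 1) ▸ h r ⟨by simpa using hr, hrm⟩ i hi
    · simp

lemma nonattacking_shape_iff (hn : 2 ≤ n) (τ : ℕ × ℕ → ℕ) :
    (∀ u ∈ dgF n (shape n p m), ∀ v ∈ dgF n (shape n p m), Attack u v → τ u ≠ τ v) ↔
      (∀ r ∈ Set.Icc 1 m, Set.InjOn (row τ r) (Set.Icc 2 n)) ∧
        ∀ r ∈ Set.Ico 1 m, ∀ i ∈ Set.Icc 2 n, row τ (r + 1) i ∉ row τ r '' Set.Ioc i n := by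
  have hdg : ∀ {i r}, i ∈ Set.Icc 2 n → r ∈ Set.Icc 1 m → (i, r) ∈ dgF n (shape n p m) := by
    intro i r hi hr
    simp only [mem_dgF_shape hn, shape, Set.mem_Icc] at *
    grind
  constructor
  · refine fun h => ⟨fun r hr i hi i' hi' heq => ?_, fun r hr i hi => ?_⟩
    · by_contra hne
      exact h _ (hdg hi hr) _ (hdg hi' hr) ⟨by simpa using hne, Or.inl rfl⟩ heq
    · rintro ⟨i', hi', heq⟩
      refine h _ (hdg hi ⟨by simp, hr.2⟩) _ (hdg ⟨hi.1.trans hi'.1.le, hi'.2⟩ ⟨hr.1, hr.2.le⟩)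
        ⟨by simp, Or.inr (Or.inl ⟨rfl, hi'.1⟩)⟩ heq.symm
  · rintro ⟨hinj, hstep⟩ ⟨i, r⟩ hu ⟨i', r'⟩ hv ⟨hne, hattack⟩ heq
    simp only [mem_dgF_shape hn, shape, Set.mem_Icc, Set.InjOn, row, Set.mem_image, Set.mem_Ioc,
      Set.mem_Ico] at *
    rcases hattack with rfl | ⟨rfl, hlt⟩ | ⟨rfl, hlt⟩
    · have := @hinj r (by grind) i (by grind) i' (by grind) heq
      grind
    · exact hstep r' (by grind) i (by grind) ⟨i', by grind, heq.symm⟩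
    · exact hstep r (by grind) i' (by grind) ⟨i, by grind, heq⟩

lemma isStack_iff (hn : 2 ≤ n) (τ : ℕ × ℕ → ℕ) :
    IsStack n m τ ↔
      (∀ u ∈ dgF n (shape n p m), ∀ v ∈ dgF n (shape n p m), Attack u v → τ u ≠ τ v) ∧
        GreedyRule n (shape n p m) τ := by
  rw [greedyRule_shape_iff hn, nonattacking_shape_iff hn, and_assoc]
  simp only [IsStack, RowStep, ← forall_and]

end Stack

section Labelings

variable {α : Type*} {A : Finset α} {n : ℕ} {g : α → ℕ}

open Classical in
/-- The maps `A → {1, …, n}`, extended by zero to all of `α`. -/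
noncomputable def labelings (A : Finset α) (n : ℕ) : Finset (α → ℕ) :=
  (Fintype.piFinset fun _ : {u // u ∈ A} => Icc 1 n).image
    fun f => Function.extend Subtype.val f 0

lemma mem_labelings : g ∈ labelings A n ↔ (∀ u ∈ A, g u ∈ Icc 1 n) ∧ ∀ u ∉ A, g u = 0 := by
  simp only [labelings, mem_image, Fintype.mem_piFinset]
  constructor
  · rintro ⟨f, hf, rfl⟩
    refine ⟨fun u hu => ?_, fun u hu =>
      Function.extend_apply' f _ u fun ⟨v, hv⟩ => hu (hv ▸ v.2)⟩
    rw [Subtype.val_injective.extend_apply f _ ⟨u, hu⟩]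
    exact hf ⟨u, hu⟩
  · rintro ⟨hA, h0⟩
    refine ⟨fun u => g u, fun u => hA u u.2, funext fun u => ?_⟩
    by_cases hu : u ∈ A
    · exact Subtype.val_injective.extend_apply _ _ ⟨u, hu⟩
    · rw [Function.extend_apply' _ _ u fun ⟨v, hv⟩ => hu (hv ▸ v.2), h0 u hu, Pi.zero_apply]

/-- The number of elements of `A` labelled `i` by `g`, as an integer so that contents can be
subtracted. -/
def content (A : Finset α) (g : α → ℕ) (i : ℕ) : ℤ := #{u ∈ A | g u = i}

lemma content_comp_perm (e : Equiv.Perm α) (he : ∀ u, e u ∈ A ↔ u ∈ A) :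
    content A (g ∘ e) = content A g := by
  ext i
  rw [content, content, card_equiv e]
  simp [he]

lemma comp_perm_mem_labelings_iff (e : Equiv.Perm α) (he : ∀ u, e u ∈ A ↔ u ∈ A) :
    g ∘ e ∈ labelings A n ↔ g ∈ labelings A n := by
  rw [mem_labelings, mem_labelings]
  exact and_congr (e.forall_congr fun u => by simp only [he, Function.comp_apply])
    (e.forall_congr fun u => by simp only [he, Function.comp_apply])

end Labelings

lemma ext_eq_extend (n : ℕ) (mu : ℕ → ℕ) (f : {u // u ∈ dgF n mu} → ℕ) :
    ext n mu f = Function.extend Subtype.val f 0 := by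
  funext u
  by_cases hu : u ∈ dgF n mu
  · rw [Subtype.val_injective.extend_apply f _ ⟨u, hu⟩, ext, dif_pos hu]
  · rw [Function.extend_apply' f _ u fun ⟨v, hv⟩ => hu (hv ▸ v.2), ext, dif_neg hu, Pi.zero_apply]

open Classical in
lemma cCoef_eq_sum_labelings (n : ℕ) (mu a k : ℕ → ℕ) :
    cCoef n mu a k = ∑ τ ∈ labelings (dgF n mu) n with CCond n mu a k τ, X ^ ascStat n mu τ := by
  rw [labelings, filter_image, sum_image (Function.extend_injective Subtype.val_injective _).injOn]
  simp only [cCoef, ext_eq_extend]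
  congr!

section StackSum

variable {n p m : ℕ} {κ : ℕ → ℤ}

open Classical in
/-- The stacks of shape `shape n p m` and content `κ`, extended by zero outside the diagram. -/
noncomputable def stackFillings (n p m : ℕ) (κ : ℕ → ℤ) : Finset (ℕ × ℕ → ℕ) :=
  {τ ∈ labelings (dgF n (shape n p m)) n |
    IsStack n m τ ∧ ∀ i ∈ Icc 1 n, content (dgF n (shape n p m)) τ i = κ i}

lemma mem_stackFillings {τ : ℕ × ℕ → ℕ} :
    τ ∈ stackFillings n p m κ ↔ τ ∈ labelings (dgF n (shape n p m)) n ∧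
      IsStack n m τ ∧ ∀ i ∈ Icc 1 n, content (dgF n (shape n p m)) τ i = κ i := by
  simp only [stackFillings, mem_filter]

open Classical in
/-- The generating function, by ascent statistic, of the stacks with content `κ` and bottom row
`a`. -/
noncomputable def stackSum (n p m : ℕ) (a : ℕ → ℕ) (κ : ℕ → ℤ) : ℤ[X] :=
  ∑ τ ∈ stackFillings n p m κ with row τ 1 = a, X ^ ascStat n (shape n p m) τ

lemma cCoef_shape (hn : 2 ≤ n) (hm : 1 ≤ m) (a : ℕ → ℕ) {k : ℕ → ℕ}
    (hk : ∀ i ∈ Icc 1 n, (k i : ℤ) = κ i) :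
    cCoef n (shape n p m) a k = stackSum n p m (Set.indicator (Set.Icc 2 n) a) κ := by
  rw [cCoef_eq_sum_labelings, stackSum]
  refine sum_congr (Finset.ext fun τ => ?_) fun _ _ => rfl
  simp only [mem_filter, mem_stackFillings, and_assoc]
  refine and_congr_right fun hτ => ?_
  obtain ⟨hlabel, hzero⟩ := mem_labelings.1 hτ
  have hrow : (∀ j, (j, 1) ∈ dgF n (shape n p m) → τ (j, 1) = a j) ↔
      row τ 1 = Set.indicator (Set.Icc 2 n) a := by
    have hbottom : ∀ j, (j, 1) ∈ dgF n (shape n p m) ↔ j ∈ Set.Icc 2 n := by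
      intro j
      simp only [mem_dgF_shape hn, shape, Set.mem_Icc]
      grind
    simp only [funext_iff, Set.indicator_apply, row, ← hbottom]
    exact forall_congr' fun j => by split_ifs with h <;> simp [h, hzero]
  have hfill : ∀ u ∈ dgF n (shape n p m), 1 ≤ τ u ∧ τ u ≤ n := by simpa using hlabel
  have hcontent : (∀ i, 1 ≤ i → i ≤ n → #{u ∈ dgF n (shape n p m) | τ u = i} = k i) ↔
      ∀ i ∈ Icc 1 n, content (dgF n (shape n p m)) τ i = κ i := by
    simp only [← and_imp, ← mem_Icc, content]
    exact forall₂_congr fun i hi => by rw [← hk i hi, Nat.cast_inj]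
  simp only [CCond, hrow, isStack_iff (p := p) hn, hcontent]
  tauto

end StackSum

section Recursion

variable {n p m : ℕ} {a c : ℕ → ℕ} {τ : ℕ × ℕ → ℕ} {κ : ℕ → ℤ}

open Classical in
/-- The injective labelings of the columns `2, …, n`. -/
noncomputable def rows (n : ℕ) : Finset (ℕ → ℕ) :=
  {c ∈ labelings (Icc 2 n) n | Set.InjOn c (Set.Icc 2 n)}

lemma mem_rows : c ∈ rows n ↔ c ∈ labelings (Icc 2 n) n ∧ Set.InjOn c (Set.Icc 2 n) := by
  simp only [rows, mem_filter]

lemma injOn_of_mem_rows (hc : c ∈ rows n) : Set.InjOn c (Set.Icc 2 n) := (mem_rows.1 hc).2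

lemma apply_mem_of_mem_rows (hc : c ∈ rows n) {k : ℕ} (hk : k ∈ Icc 2 n) : c k ∈ Icc 1 n :=
  (mem_labelings.1 (mem_rows.1 hc).1).1 k hk

lemma apply_eq_zero_of_mem_rows (hc : c ∈ rows n) {k : ℕ} (hk : k ∉ Icc 2 n) : c k = 0 :=
  (mem_labelings.1 (mem_rows.1 hc).1).2 k hk

lemma content_of_mem_rows (ha : a ∈ rows n) (i : ℕ) :
    content (Icc 2 n) a i = if i ∈ (Icc 2 n).image a then 1 else 0 := by
  have hinj : Set.InjOn a (Icc 2 n) := by simpa using injOn_of_mem_rows ha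
  split_ifs with hi
  · obtain ⟨k, hk, rfl⟩ := mem_image.1 hi
    rw [content, Nat.cast_eq_one, card_eq_one]
    refine ⟨k, ?_⟩
    ext l
    rw [mem_filter, mem_singleton]
    exact ⟨fun h => hinj h.1 hk h.2, by rintro rfl; exact ⟨hk, rfl⟩⟩
  · rw [content, Nat.cast_eq_zero, card_eq_zero, filter_eq_empty_iff]
    exact fun k hk h => hi (mem_image.2 ⟨k, hk, h⟩)

/-- The contribution to the generating function of stacking a row `c`, together with columns of
heights `shape n p m` of which it is the bottom, on top of the row `a`. -/
noncomputable def rowWeight (n p m : ℕ) (a c : ℕ → ℕ) : ℤ[X] :=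
  ∏ i ∈ Icc 2 n, stepWeight (c '' Set.Ico 2 i) (a '' Set.Ioc i n) (X ^ shape n p m i) (a i) (c i)

open Classical in
lemma rowWeight_eq_ite (n p m : ℕ) (a c : ℕ → ℕ) :
    rowWeight n p m a c =
      if RowStep n a c then X ^ ∑ i ∈ Icc 2 n with c i < a i, shape n p m i else 0 := by
  simp only [rowWeight, stepWeight, prod_ite_zero, ascWeight]
  refine if_congr (by simp [RowStep]) ?_ rfl
  rw [← prod_filter, prod_pow_eq_pow_sum]

/-- The filling with bottom row `a` and the rows of `τ` above it. -/
def pushRow (a : ℕ → ℕ) (τ : ℕ × ℕ → ℕ) : ℕ × ℕ → ℕ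
  | (_, 0) => 0
  | (i, 1) => a i
  | (i, r + 2) => τ (i, r + 1)

/-- The filling `τ` with its bottom row removed. -/
def popRow (τ : ℕ × ℕ → ℕ) : ℕ × ℕ → ℕ
  | (_, 0) => 0
  | (i, r + 1) => τ (i, r + 2)

lemma popRow_pushRow (a : ℕ → ℕ) (hτ : row τ 0 = 0) : popRow (pushRow a τ) = τ := by
  funext ⟨i, r⟩
  cases r with
  | zero => exact (congrFun hτ i).symm
  | succ r => rfl

lemma pushRow_popRow (hτ : row τ 0 = 0) : pushRow (row τ 1) (popRow τ) = τ := by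
  funext ⟨i, r⟩
  match r with
  | 0 => exact (congrFun hτ i).symm
  | 1 => rfl
  | r + 2 => rfl

lemma shape_succ {i : ℕ} (hi : i ∈ Icc 2 n) : shape n p (m + 1) i = shape n p m i + 1 := by
  simp only [shape, if_pos (mem_Icc.1 hi).1]
  split_ifs <;> ring

lemma sum_dgF_shape {M : Type*} [AddCommMonoid M] (hn : 2 ≤ n) (f : ℕ × ℕ → M) :
    ∑ u ∈ dgF n (shape n p m), f u = ∑ i ∈ Icc 2 n, ∑ r ∈ range (shape n p m i), f (i, r + 1) := by
  rw [sum_finset_product _ (Icc 2 n) fun i => (range (shape n p m i)).map (addRightEmbedding 1)]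
  · simp only [sum_map, addRightEmbedding_apply]
  · rintro ⟨i, r⟩
    simp only [mem_dgF_shape hn, Set.mem_Icc, mem_Icc, mem_map, mem_range, addRightEmbedding_apply]
    exact and_congr_right fun _ => ⟨fun h => ⟨r - 1, by grind⟩, by grind⟩

lemma sum_dgF_shape_succ {M : Type*} [AddCommMonoid M] (hn : 2 ≤ n) (f : ℕ × ℕ → M) :
    ∑ u ∈ dgF n (shape n p (m + 1)), f u =
      ∑ i ∈ Icc 2 n, f (i, 1) + ∑ u ∈ dgF n (shape n p m), f (u.1, u.2 + 1) := by
  rw [sum_dgF_shape hn, sum_dgF_shape hn, ← sum_add_distrib]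
  refine sum_congr rfl fun i hi => ?_
  rw [shape_succ hi, sum_range_succ', add_comm]

lemma popRow_apply {u : ℕ × ℕ} (hu : u ∈ dgF n (shape n p m)) :
    popRow τ u = τ (u.1, u.2 + 1) := by
  obtain ⟨i, r⟩ := u
  obtain ⟨r, rfl⟩ := Nat.exists_eq_add_of_le' (mem_dgF.1 hu).2.1
  rfl

lemma content_shape_succ (hn : 2 ≤ n) (τ : ℕ × ℕ → ℕ) :
    content (dgF n (shape n p (m + 1))) τ =
      content (Icc 2 n) (row τ 1) + content (dgF n (shape n p m)) (popRow τ) := by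
  funext i
  simp only [content, card_filter, sum_dgF_shape_succ hn, Pi.add_apply, Nat.cast_add]
  congr 2
  exact sum_congr rfl fun u hu => by rw [popRow_apply hu]

lemma ascStat_shape_succ (hn : 2 ≤ n) (τ : ℕ × ℕ → ℕ) :
    ascStat n (shape n p (m + 1)) τ =
      (∑ i ∈ Icc 2 n with row (popRow τ) 1 i < row τ 1 i, shape n p m i) +
        ascStat n (shape n p m) (popRow τ) := by
  simp only [ascStat, sum_filter, sum_dgF_shape hn, ← sum_add_distrib]
  refine sum_congr rfl fun i hi => ?_
  rw [shape_succ hi]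
  cases shape n p m i with
  | zero => simp
  | succ h =>
    have h2 : ∀ r, 2 ≤ r + 1 + 1 := fun r => Nat.le_add_left 2 r
    rw [sum_range_succ', sum_range_succ', sum_range_succ' _ h]
    simp only [dbox, row, popRow, h2, true_and, Nat.not_ofNat_le_one, false_and, if_false, add_zero,
      add_tsub_cancel_right, Nat.add_sub_add_right, Nat.reduceAdd]
    exact add_comm _ _

lemma isStack_succ_iff (hm : 1 ≤ m) (τ : ℕ × ℕ → ℕ) :
    IsStack n (m + 1) τ ↔ (Set.InjOn (row τ 1) (Set.Icc 2 n) ∧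
      RowStep n (row τ 1) (row (popRow τ) 1)) ∧ IsStack n m (popRow τ) := by
  constructor
  · rintro ⟨hinj, hstep⟩
    refine ⟨⟨hinj 1 (by simp), hstep 1 ⟨le_rfl, by omega⟩⟩, fun r hr => ?_, fun r hr => ?_⟩ <;>
      obtain ⟨r, rfl⟩ := Nat.exists_eq_add_of_le' hr.1
    · exact hinj (r + 2) ⟨by simp, Nat.succ_le_succ hr.2⟩
    · exact hstep (r + 2) ⟨by simp, Nat.succ_lt_succ hr.2⟩
  · rintro ⟨⟨hinj₁, hstep₁⟩, hinj, hstep⟩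
    refine ⟨fun r hr => ?_, fun r hr => ?_⟩ <;> obtain ⟨hr₁, hrm⟩ := hr
    · match r with
      | 1 => exact hinj₁
      | r + 2 => exact hinj (r + 1) ⟨by simp, by omega⟩
    · match r with
      | 1 => exact hstep₁
      | r + 2 => exact hstep (r + 1) ⟨by simp, by omega⟩

lemma mem_dgF_shape_one (hn : 2 ≤ n) (i : ℕ) :
    (i, 1) ∈ dgF n (shape n p (m + 1)) ↔ i ∈ Icc 2 n := by
  rw [mem_dgF_shape hn, ← Finset.coe_Icc, mem_coe]
  exact and_iff_left_of_imp fun hi => by simp [shape_succ hi]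

lemma mem_dgF_shape_succ (hn : 2 ≤ n) (i r : ℕ) :
    (i, r + 2) ∈ dgF n (shape n p (m + 1)) ↔ (i, r + 1) ∈ dgF n (shape n p m) := by
  rw [mem_dgF_shape hn, mem_dgF_shape hn, ← Finset.coe_Icc, mem_coe]
  refine and_congr_right fun hi => ?_
  simp [shape_succ hi]

lemma notMem_dgF_zero {lam : ℕ → ℕ} {i : ℕ} : (i, 0) ∉ dgF n lam := by simp [mem_dgF]

lemma mem_labelings_shape_succ (hn : 2 ≤ n) :
    τ ∈ labelings (dgF n (shape n p (m + 1))) n ↔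
      row τ 0 = 0 ∧ row τ 1 ∈ labelings (Icc 2 n) n ∧
        popRow τ ∈ labelings (dgF n (shape n p m)) n := by
  simp only [mem_labelings, Prod.forall, funext_iff, row, Pi.zero_apply]
  constructor
  · rintro ⟨hin, hout⟩
    refine ⟨fun i => hout i 0 notMem_dgF_zero,
      ⟨fun i hi => hin i 1 ((mem_dgF_shape_one hn i).2 hi),
        fun i hi => hout i 1 (mt (mem_dgF_shape_one hn i).1 hi)⟩, ?_, ?_⟩ <;> rintro i (_ | r) hu
    · exact absurd hu notMem_dgF_zero
    · exact hin i (r + 2) ((mem_dgF_shape_succ hn i r).2 hu)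
    · rfl
    · exact hout i (r + 2) (mt (mem_dgF_shape_succ hn i r).1 hu)
  · rintro ⟨h₀, ⟨hin₁, hout₁⟩, hin, hout⟩
    refine ⟨?_, ?_⟩ <;> rintro i (_ | _ | r) hu
    · exact absurd hu notMem_dgF_zero
    · exact hin₁ i ((mem_dgF_shape_one hn i).1 hu)
    · exact hin i (r + 1) ((mem_dgF_shape_succ hn i r).1 hu)
    · exact h₀ i
    · exact hout₁ i (mt (mem_dgF_shape_one hn i).2 hu)
    · exact hout i (r + 1) (mt (mem_dgF_shape_succ hn i r).2 hu)

lemma row_zero_eq_zero {lam : ℕ → ℕ} (hτ : τ ∈ labelings (dgF n lam) n) : row τ 0 = 0 :=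
  funext fun _ => (mem_labelings.1 hτ).2 _ notMem_dgF_zero

lemma mem_stackFillings_succ (hn : 2 ≤ n) (hm : 1 ≤ m) :
    τ ∈ stackFillings n p (m + 1) κ ↔
      row τ 0 = 0 ∧ (row τ 1 ∈ rows n ∧ RowStep n (row τ 1) (row (popRow τ) 1)) ∧
        popRow τ ∈ stackFillings n p m (κ - content (Icc 2 n) (row τ 1)) := by
  simp only [mem_stackFillings, mem_rows, mem_labelings_shape_succ hn, isStack_succ_iff hm,
    content_shape_succ hn, Pi.add_apply, Pi.sub_apply, eq_sub_iff_add_eq']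
  tauto

lemma row_one_mem_rows (hn : 2 ≤ n) (hm : 1 ≤ m) (hτ : τ ∈ stackFillings n p m κ) :
    row τ 1 ∈ rows n := by
  obtain ⟨hlabel, hstack, -⟩ := mem_stackFillings.1 hτ
  obtain ⟨m, rfl⟩ := Nat.exists_eq_add_of_le' hm
  exact mem_rows.2 ⟨((mem_labelings_shape_succ hn).1 hlabel).2.1, hstack.1 1 (by simp)⟩

theorem stackSum_succ (hn : 2 ≤ n) (hm : 1 ≤ m) (ha : a ∈ rows n) (κ : ℕ → ℤ) :
    stackSum n p (m + 1) a κ =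
      ∑ c ∈ rows n, rowWeight n p m a c * stackSum n p m c (κ - content (Icc 2 n) a) := by
  classical
  set κ' := κ - content (Icc 2 n) a with hκ'
  calc stackSum n p (m + 1) a κ
    _ = ∑ τ ∈ stackFillings n p m κ' with RowStep n a (row τ 1),
          X ^ (∑ i ∈ Icc 2 n with row τ 1 i < a i, shape n p m i) *
            X ^ ascStat n (shape n p m) τ := by
      refine sum_bij' (fun τ _ => popRow τ) (fun τ _ => pushRow a τ) ?_ ?_ ?_ ?_ ?_
      · intro τ hτ
        obtain ⟨hmem, rfl⟩ := mem_filter.1 hτ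
        rw [mem_stackFillings_succ hn hm] at hmem
        exact mem_filter.2 ⟨hmem.2.2, hmem.2.1.2⟩
      · intro τ hτ
        obtain ⟨hmem, hstep⟩ := mem_filter.1 hτ
        have hpop := popRow_pushRow a (row_zero_eq_zero (mem_stackFillings.1 hmem).1)
        refine mem_filter.2 ⟨(mem_stackFillings_succ hn hm).2 ⟨rfl, ⟨ha, ?_⟩, ?_⟩, rfl⟩
        · rwa [hpop]
        · rwa [hpop]
      · intro τ hτ
        obtain ⟨hmem, rfl⟩ := mem_filter.1 hτ
        exact pushRow_popRow ((mem_stackFillings_succ hn hm).1 hmem).1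
      · intro τ hτ
        exact popRow_pushRow a (row_zero_eq_zero (mem_stackFillings.1 (mem_filter.1 hτ).1).1)
      · intro τ hτ
        obtain ⟨-, rfl⟩ := mem_filter.1 hτ
        rw [ascStat_shape_succ hn, pow_add]
    _ = ∑ τ ∈ stackFillings n p m κ',
          rowWeight n p m a (row τ 1) * X ^ ascStat n (shape n p m) τ := by
      simp only [sum_filter, rowWeight_eq_ite, ite_mul, zero_mul]
    _ = ∑ c ∈ rows n, rowWeight n p m a c * stackSum n p m c κ' := by
      rw [← sum_fiberwise_of_maps_to (g := fun τ => row τ 1)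
        fun τ hτ => row_one_mem_rows hn hm hτ]
      refine sum_congr rfl fun c _ => ?_
      rw [stackSum, mul_sum]
      exact sum_congr rfl fun τ hτ => by rw [(mem_filter.1 hτ).2]

end Recursion

section ColumnSymmetry

variable {n p m i : ℕ} {a c : ℕ → ℕ}

/-- The factor of `rowWeight n p m a c` contributed by the columns other than `i` and `i + 1`. -/
noncomputable def restWeight (n p m i : ℕ) (a c : ℕ → ℕ) : ℤ[X] :=
  ∏ k ∈ ((Icc 2 n).erase i).erase (i + 1),
    stepWeight (c '' Set.Ico 2 k) (a '' Set.Ioc k n) (X ^ shape n p m k) (a k) (c k)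

lemma restWeight_comp_swap_left (hin : i + 1 ≤ n) :
    restWeight n p m i (a ∘ Equiv.swap i (i + 1)) c = restWeight n p m i a c := by
  refine prod_congr rfl fun k hk => ?_
  obtain ⟨hk₁, hk₀, -⟩ : k ≠ i + 1 ∧ k ≠ i ∧ k ∈ Icc 2 n := by simpa using hk
  rw [image_comp_swap a (by simp only [Set.mem_Ioc]; omega), Function.comp_apply,
    Equiv.swap_apply_of_ne_of_ne hk₀ hk₁]

lemma restWeight_comp_swap_right (hi : 2 ≤ i) :
    restWeight n p m i a (c ∘ Equiv.swap i (i + 1)) = restWeight n p m i a c := by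
  refine prod_congr rfl fun k hk => ?_
  obtain ⟨hk₁, hk₀, -⟩ : k ≠ i + 1 ∧ k ≠ i ∧ k ∈ Icc 2 n := by simpa using hk
  rw [image_comp_swap c (by simp only [Set.mem_Ico]; omega), Function.comp_apply,
    Equiv.swap_apply_of_ne_of_ne hk₀ hk₁]

lemma rowWeight_eq_mul_pairWeight (hi : 2 ≤ i) (hin : i + 1 < n) (a c : ℕ → ℕ) :
    rowWeight n p m a c = restWeight n p m i a c *
      pairWeight (c '' Set.Ico 2 i) (a '' Set.Ioc (i + 1) n) (X ^ m) (a i) (a (i + 1))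
        (c i) (c (i + 1)) := by
  have hshape : shape n p m i = m ∧ shape n p m (i + 1) = m := by simp only [shape]; grind
  rw [rowWeight, ← mul_prod_erase _ _ (show i ∈ Icc 2 n by grind),
    ← mul_prod_erase _ _ (show i + 1 ∈ (Icc 2 n).erase i by grind), ← mul_assoc, mul_comm,
    restWeight, pairWeight, hshape.1, hshape.2, ← Set.image_insert_eq, ← Set.image_insert_eq,
    Set.insert_Ico_right_eq_Ico_add_one hi,
    Set.insert_Ioc_add_one_left_eq_Ioc (show i < n by omega)]

/-- By pigeonhole, one of the labels of `c` in columns `2, …, i + 1` occurs in `a` in one of the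
columns `i, …, n`; in a column before `i` it would violate the non-attacking condition. -/
lemma mem_image_or_mem_image (hi : 2 ≤ i) (hin : i + 1 ≤ n) (ha : a ∈ rows n) (hc : c ∈ rows n)
    (hrest : restWeight n p m i a c ≠ 0) :
    c i ∈ a '' Set.Icc i n ∨ c (i + 1) ∈ a '' Set.Icc i n := by
  have hmeet : ((Icc 2 (i + 1)).image c ∩ (Icc i n).image a).Nonempty := by
    refine inter_nonempty_of_card_lt_card_add_card (s := Icc 1 n) ?_ ?_ ?_
    · exact image_subset_iff.2 fun k hk => apply_mem_of_mem_rows hc (by grind)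
    · exact image_subset_iff.2 fun k hk => apply_mem_of_mem_rows ha (by grind)
    · rw [card_image_of_injOn ((injOn_of_mem_rows hc).mono (by grind)),
        card_image_of_injOn ((injOn_of_mem_rows ha).mono (by grind))]
      simp only [Nat.card_Icc]
      omega
  obtain ⟨_, hx⟩ := hmeet
  obtain ⟨⟨k, hk, rfl⟩, l, hl, hlk⟩ := by simpa only [mem_inter, mem_image, mem_Icc] using hx
  by_cases hki : k < i
  · refine absurd (prod_eq_zero (i := k) (by grind) ?_) hrest
    exact stepWeight_eq_zero_of_mem _ ⟨l, ⟨by omega, hl.2⟩, hlk⟩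
  · obtain rfl | rfl : k = i ∨ k = i + 1 := by omega
    · exact Or.inl ⟨l, hl, hlk⟩
    · exact Or.inr ⟨l, hl, hlk⟩

lemma rowWeight_exchange (hi : 2 ≤ i) (hin : i + 1 < n) (ha : a ∈ rows n) (hc : c ∈ rows n) :
    rowWeight n p m a c + rowWeight n p m a (c ∘ Equiv.swap i (i + 1)) =
      rowWeight n p m (a ∘ Equiv.swap i (i + 1)) c +
        rowWeight n p m (a ∘ Equiv.swap i (i + 1)) (c ∘ Equiv.swap i (i + 1)) := by
  have hQ : i ∈ Set.Ioc (i + 1) n ↔ i + 1 ∈ Set.Ioc (i + 1) n := by simp only [Set.mem_Ioc]; omega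
  have hP : i ∈ Set.Ico 2 i ↔ i + 1 ∈ Set.Ico 2 i := by simp only [Set.mem_Ico]; omega
  simp only [rowWeight_eq_mul_pairWeight hi hin, restWeight_comp_swap_left hin.le,
    restWeight_comp_swap_right hi, image_comp_swap _ hQ, image_comp_swap _ hP]
  simp only [Function.comp_apply, Equiv.swap_apply_left, Equiv.swap_apply_right, ← mul_add]
  by_cases hrest : restWeight n p m i a c = 0
  · simp only [hrest, zero_mul]
  refine congrArg (restWeight n p m i a c * ·) ?_
  have hinj : ∀ {f}, f ∈ rows n → f i ≠ f (i + 1) := fun hf h => by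
    simpa using injOn_of_mem_rows hf ⟨hi, by omega⟩ ⟨by omega, hin.le⟩ h
  refine pairWeight_exchange _ (hinj ha) (hinj hc) ?_
  rw [← Set.image_insert_eq, ← Set.image_insert_eq,
    Set.insert_Ioc_add_one_left_eq_Ioc (show i < n by omega),
    Set.Ioc_insert_left (by omega)]
  exact mem_image_or_mem_image hi hin.le ha hc hrest

lemma swap_apply_mem_Icc_iff (hi : 2 ≤ i) (hin : i + 1 ≤ n) (k : ℕ) :
    Equiv.swap i (i + 1) k ∈ Icc 2 n ↔ k ∈ Icc 2 n := by
  simpa only [← coe_Icc, mem_coe] using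
    swap_apply_mem_iff (S := Set.Icc 2 n) (by simp only [Set.mem_Icc]; omega) k

lemma comp_swap_mem_rows_iff (hi : 2 ≤ i) (hin : i + 1 ≤ n) :
    c ∘ Equiv.swap i (i + 1) ∈ rows n ↔ c ∈ rows n := by
  rw [mem_rows, mem_rows, comp_perm_mem_labelings_iff _ (swap_apply_mem_Icc_iff hi hin),
    injOn_comp_swap_iff (by simp only [Set.mem_Icc]; omega)]

/-- Exchange of the columns `i` and `i + 1` of the boxes. -/
def boxSwap (i : ℕ) : Equiv.Perm (ℕ × ℕ) := (Equiv.swap i (i + 1)).prodCongr (Equiv.refl ℕ)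

lemma shape_swap_apply (hi : 2 ≤ i) (hin : i + 1 < n) (k : ℕ) :
    shape n p m (Equiv.swap i (i + 1) k) = shape n p m k := by
  rw [Equiv.swap_apply_def]
  simp only [shape]
  grind

lemma boxSwap_mem_dgF_iff (hi : 2 ≤ i) (hin : i + 1 < n) (u : ℕ × ℕ) :
    boxSwap i u ∈ dgF n (shape n p m) ↔ u ∈ dgF n (shape n p m) := by
  obtain ⟨k, r⟩ := u
  have hn : 2 ≤ n := by omega
  rw [boxSwap, Equiv.prodCongr_apply, Prod.map_apply, mem_dgF_shape hn, mem_dgF_shape hn,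
    shape_swap_apply hi hin, Equiv.refl_apply, ← coe_Icc, mem_coe, mem_coe,
    swap_apply_mem_Icc_iff hi hin.le]

lemma ascStat_comp_boxSwap (hi : 2 ≤ i) (hin : i + 1 < n) (τ : ℕ × ℕ → ℕ) :
    ascStat n (shape n p m) (τ ∘ boxSwap i) = ascStat n (shape n p m) τ := by
  refine sum_equiv (boxSwap i) (fun u => ?_) fun u _ => ?_
  · rw [mem_filter, mem_filter, boxSwap_mem_dgF_iff hi hin]
    rfl
  · rw [← shape_swap_apply hi hin u.1]
    rfl

lemma comp_boxSwap_mem_stackFillings_iff (hi : 2 ≤ i) (hin : i + 1 < n) (τ : ℕ × ℕ → ℕ)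
    (κ : ℕ → ℤ) :
    τ ∘ boxSwap i ∈ stackFillings n p 1 κ ↔ τ ∈ stackFillings n p 1 κ := by
  have hrow : row (τ ∘ boxSwap i) 1 = row τ 1 ∘ Equiv.swap i (i + 1) := rfl
  have hmem : i ∈ Set.Icc 2 n ↔ i + 1 ∈ Set.Icc 2 n := by simp only [Set.mem_Icc]; omega
  simp only [mem_stackFillings, comp_perm_mem_labelings_iff _ (boxSwap_mem_dgF_iff hi hin),
    content_comp_perm _ (boxSwap_mem_dgF_iff hi hin), IsStack, Set.Icc_self,
    Set.mem_singleton_iff, forall_eq, Set.Ico_self, Set.mem_empty_iff_false, false_imp_iff,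
    implies_true, hrow, injOn_comp_swap_iff hmem]

lemma stackSum_one_comp_swap (hi : 2 ≤ i) (hin : i + 1 < n) (a : ℕ → ℕ) (κ : ℕ → ℤ) :
    stackSum n p 1 (a ∘ Equiv.swap i (i + 1)) κ = stackSum n p 1 a κ := by
  classical
  refine (sum_equiv ((boxSwap i).arrowCongr (Equiv.refl ℕ)) (fun τ => ?_) fun τ _ => ?_).symm
  · rw [mem_filter, mem_filter]
    exact and_congr (comp_boxSwap_mem_stackFillings_iff hi hin τ κ).symm
      (Equiv.surjective (Equiv.swap i (i + 1))).injective_comp_right.eq_iff.symm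
  · exact congrArg (X ^ ·) (ascStat_comp_boxSwap hi hin τ).symm

theorem stackSum_comp_swap (hi : 2 ≤ i) (hin : i + 1 < n) (hm : 1 ≤ m) (ha : a ∈ rows n)
    (κ : ℕ → ℤ) : stackSum n p m (a ∘ Equiv.swap i (i + 1)) κ = stackSum n p m a κ := by
  induction m, hm using Nat.le_induction generalizing a κ with
  | base => exact stackSum_one_comp_swap hi hin a κ
  | succ m hm ih =>
    have hn : 2 ≤ n := by omega
    rw [stackSum_succ hn hm ((comp_swap_mem_rows_iff hi hin.le).2 ha), stackSum_succ hn hm ha,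
      content_comp_perm _ (swap_apply_mem_Icc_iff hi hin.le)]
    exact sum_mul_eq_sum_mul_of_add_comp ((Equiv.swap i (i + 1)).arrowCongr (Equiv.refl ℕ))
      (fun c => comp_swap_mem_rows_iff hi hin.le) (fun c hc => ih hc _)
      fun c hc => (rowWeight_exchange hi hin ha hc).symm

end ColumnSymmetry

section Difference

variable {n p m q : ℕ} {a c : ℕ → ℕ}

lemma update_mem_rows {v : ℕ} (ha : a ∈ rows n) (hq : q ∈ Icc 2 n) (hv : v ∈ Icc 1 n)
    (hmiss : v ∉ a '' Set.Icc 2 n) : Function.update a q v ∈ rows n := by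
  refine mem_rows.2 ⟨mem_labelings.2 ⟨fun k hk => ?_, fun k hk => ?_⟩, fun k hk l hl hkl => ?_⟩
  · obtain rfl | hkq := eq_or_ne k q
    · rwa [Function.update_self]
    · rw [Function.update_of_ne hkq]
      exact apply_mem_of_mem_rows ha hk
  · rw [Function.update_of_ne (by grind), apply_eq_zero_of_mem_rows ha hk]
  · have hinj := injOn_of_mem_rows ha hk hl
    simp only [Function.update_apply] at hkl
    grind

lemma insert_image_eq_Icc {v : ℕ} (ha : a ∈ rows n) (hv : v ∈ Icc 1 n)
    (hmiss : v ∉ a '' Set.Icc 2 n) : insert v ((Icc 2 n).image a) = Icc 1 n := by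
  refine eq_of_subset_of_card_le ?_ ?_
  · exact insert_subset hv (image_subset_iff.2 fun k hk => apply_mem_of_mem_rows ha hk)
  · rw [card_insert_of_notMem (by simpa [← coe_Icc] using hmiss), card_image_of_injOn]
    · simp only [Nat.card_Icc]
      grind
    · simpa using injOn_of_mem_rows ha

/-- If `c` agrees with `a` in column `2`, then in the first column where they differ `c` has to use
the missing label `a 2 + 1`, which the greedy rule forbids. -/
lemma eq_of_rowStep (ha : a ∈ rows n) (hc : c ∈ rows n) (hmiss : a 2 + 1 ∉ a '' Set.Icc 2 n)
    (hlt : a 2 < n) (hstep : RowStep n a c) (h2 : c 2 = a 2) : c = a := by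
  have hagree : ∀ k ∈ Icc 2 n, c k = a k := by
    intro k
    induction k using Nat.strong_induction_on with
    | _ k ih =>
    intro hk
    obtain ⟨hattack, hgreedy⟩ := hstep k (by simpa using hk)
    have hck : c k = a 2 + 1 ∨ ∃ l ∈ Icc 2 n, a l = c k := by
      have hall := insert_image_eq_Icc ha (v := a 2 + 1) (by grind) hmiss
      have hmem : c k ∈ insert (a 2 + 1) ((Icc 2 n).image a) :=
        hall ▸ apply_mem_of_mem_rows hc hk
      rwa [mem_insert, mem_image] at hmem
    obtain hck | ⟨l, hl, hlk⟩ := hck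
    · rcases (mem_Icc.1 hk).1.eq_or_lt with rfl | h2k
      · exact h2
      have hak : a k ≠ a 2 + 1 := fun h => hmiss ⟨k, by simpa using hk, h⟩
      exact absurd (hck ▸ mem_arc_succ hak) (Set.disjoint_left.1 hgreedy ⟨2, by simpa, h2⟩)
    · obtain hlt' | rfl | hgt := lt_trichotomy l k
      · have hlk' : l = k := injOn_of_mem_rows hc (by simpa using hl) (by simpa using hk)
          ((ih l hlt' hl).trans hlk)
        exact absurd hlk' hlt'.ne
      · exact hlk.symm
      · exact absurd ⟨l, ⟨hgt, (mem_Icc.1 hl).2⟩, hlk⟩ hattack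
  funext k
  by_cases hk : k ∈ Icc 2 n
  · exact hagree k hk
  · rw [apply_eq_zero_of_mem_rows hc hk, apply_eq_zero_of_mem_rows ha hk]

lemma rowStep_self (hinj : Set.InjOn a (Set.Icc 2 n)) : RowStep n a a := by
  refine fun i hi => ⟨?_, by simp [arc_self]⟩
  rintro ⟨k, hk, hki⟩
  exact hk.1.ne' (hinj ⟨hi.1.trans hk.1.le, hk.2⟩ hi hki)

lemma rowStep_update_two (v : ℕ) : RowStep n (Function.update a 2 v) c ↔ RowStep n a c := by
  refine forall₂_congr fun i hi => ?_
  rw [image_update_of_notMem fun h => absurd h.1 (not_lt.2 hi.1)]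
  obtain rfl | hi2 := eq_or_ne i 2
  · simp
  · rw [Function.update_of_ne hi2]

open Classical in
lemma rowWeight_update_two (hn : 2 < n) (ha : a ∈ rows n) (hc : c ∈ rows n)
    (hmiss : a 2 + 1 ∉ a '' Set.Icc 2 n) (hlt : a 2 < n) :
    rowWeight n p m (Function.update a 2 (a 2 + 1)) c =
      rowWeight n p m a c - if c = a then (1 - X ^ m : ℤ[X]) else 0 := by
  rw [rowWeight_eq_ite, rowWeight_eq_ite, rowStep_update_two]
  obtain rfl | hca := eq_or_ne c a
  · rw [if_pos (rowStep_self (injOn_of_mem_rows hc)), if_pos (rowStep_self (injOn_of_mem_rows hc)),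
      if_pos rfl]
    have hasc : {i ∈ Icc 2 n | c i < Function.update c 2 (c 2 + 1) i} = {2} := by
      ext i
      simp only [mem_filter, mem_singleton, Function.update_apply]
      grind
    have h2 : shape n p m 2 = m := by simp [shape, hn.ne]
    simp [hasc, h2]
  · rw [if_neg hca, sub_zero]
    split_ifs with hstep
    · have h2 : c 2 ≠ a 2 := fun h2 => hca (eq_of_rowStep ha hc hmiss hlt hstep h2)
      refine congrArg (X ^ ·) (sum_congr (filter_congr fun i _ => ?_) fun _ _ => rfl)
      rw [Function.update_apply]
      grind
    · rfl

lemma stackSum_update_two (hn : 2 < n) (hm : 1 ≤ m) (ha : a ∈ rows n)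
    (hmiss : a 2 + 1 ∉ a '' Set.Icc 2 n) (hlt : a 2 < n) (κ : ℕ → ℤ) :
    stackSum n p (m + 1) (Function.update a 2 (a 2 + 1))
        (κ + content (Icc 2 n) (Function.update a 2 (a 2 + 1))) =
      stackSum n p (m + 1) a (κ + content (Icc 2 n) a) - (1 - X ^ m) * stackSum n p m a κ := by
  classical
  have hup := update_mem_rows ha (q := 2) (v := a 2 + 1) (by grind) (by grind) hmiss
  rw [stackSum_succ hn.le hm hup, stackSum_succ hn.le hm ha, add_sub_cancel_right,
    add_sub_cancel_right,
    ← sum_ite_eq_of_mem' (rows n) a (fun c => (1 - X ^ m : ℤ[X]) * stackSum n p m c κ) ha,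
    ← sum_sub_distrib]
  refine sum_congr rfl fun c hc => ?_
  rw [rowWeight_update_two hn ha hc hmiss hlt, sub_mul, ite_mul, zero_mul]

theorem stackSum_update_succ (hm : 1 ≤ m) (hq : 2 ≤ q) (hqn : q < n) (ha : a ∈ rows n)
    (hmiss : a q + 1 ∉ a '' Set.Icc 2 n) (hlt : a q < n) (κ : ℕ → ℤ) :
    stackSum n p (m + 1) (Function.update a q (a q + 1))
        (κ + content (Icc 2 n) (Function.update a q (a q + 1))) =
      stackSum n p (m + 1) a (κ + content (Icc 2 n) a) - (1 - X ^ m) * stackSum n p m a κ := by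
  induction q, hq using Nat.le_induction generalizing a with
  | base => exact stackSum_update_two hqn hm ha hmiss hlt κ
  | succ q hq ih =>
    set e := Equiv.swap q (q + 1) with he
    have hmem := swap_apply_mem_Icc_iff hq hqn.le
    have ha' : a ∘ e ∈ rows n := (comp_swap_mem_rows_iff hq hqn.le).2 ha
    have hmiss' : a (q + 1) + 1 ∉ (a ∘ e) '' Set.Icc 2 n := by
      rwa [image_comp_swap a (by simp only [Set.mem_Icc]; omega)]
    have heq : (a ∘ e) q = a (q + 1) := by simp [he]
    have hupdate : Function.update a (q + 1) (a (q + 1) + 1) ∘ e =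
        Function.update (a ∘ e) q (a (q + 1) + 1) := by
      rw [Function.update_comp_equiv]
      simp [he]
    have hup := update_mem_rows ha (q := q + 1) (by grind) (by grind) hmiss
    have key := ih (by omega) ha' (by rwa [heq]) (by rwa [heq])
    rw [heq, ← hupdate, content_comp_perm _ hmem, content_comp_perm _ hmem,
      stackSum_comp_swap hq hqn (by omega) hup, stackSum_comp_swap hq hqn (by omega) ha,
      stackSum_comp_swap hq hqn hm ha] at key
    exact key

end Difference

section BottomRow

variable {n j b atil : ℕ}

lemma strictMonoOn_swap_succ (j : ℕ) : StrictMonoOn (Equiv.swap j (j + 1)) {j + 1}ᶜ := by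
  intro x hx y hy hxy
  simp only [Set.mem_compl_iff, Set.mem_singleton_iff] at hx hy
  simp only [Equiv.swap_apply_def, if_neg hx, if_neg hy]
  split_ifs <;> omega

lemma aTuple_eq_swap_comp (hj : 1 ≤ j) (hjn : j + 1 ≤ n) (hbj : b ≠ j) (hbj' : b ≠ j + 1) :
    aTuple n j b = Equiv.swap j (j + 1) ∘ aTuple n (j + 1) b := by
  set e := Equiv.swap j (j + 1) with he
  set s := ((Icc 1 n).erase (j + 1)).erase b
  have hzero : e 0 = 0 := Equiv.swap_apply_of_ne_of_ne (by omega) (by omega)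
  have hmap : ((Icc 1 n).erase j).erase b = s.map e.toEmbedding := by
    ext x
    rw [mem_map_equiv, he, Equiv.symm_swap, Equiv.swap_apply_def]
    grind
  have hsort : s.sort.map e = (((Icc 1 n).erase j).erase b).sort := by
    have hmono : StrictMonoOn e.toEmbedding s :=
      (strictMonoOn_swap_succ j).mono fun x hx => by grind
    rw [hmap, ← hmono.map_finsetSort, Equiv.coe_toEmbedding]
  funext i
  rw [Function.comp_apply, aTuple, aTuple, apply_ite e, ← hsort, ← List.getD_map _ 0 e, hzero,
    Equiv.swap_apply_of_ne_of_ne hbj hbj']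

lemma image_aTuple (ha : atil ∈ Icc 1 n) (hb : b ∈ Icc 1 n) (hab : b ≠ atil) :
    (Icc 2 n).image (aTuple n atil b) = (Icc 1 n).erase atil := by
  set s := ((Icc 1 n).erase atil).erase b with hs
  have hbmem : b ∈ (Icc 1 n).erase atil := mem_erase.2 ⟨hab, hb⟩
  have hlength : s.sort.length = n - 2 := by
    rw [length_sort, card_erase_of_mem hbmem, card_erase_of_mem ha, Nat.card_Icc]
    omega
  ext x
  rw [← insert_erase hbmem, ← hs, mem_insert, ← mem_sort (s := s) (r := (· ≤ ·)),
    List.mem_iff_getElem, mem_image]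
  have hnpos := (mem_Icc.1 hb).1.trans (mem_Icc.1 hb).2
  constructor
  · rintro ⟨i, hi, rfl⟩
    rw [mem_Icc] at hi
    refine (eq_or_ne i n).imp (fun hin => if_pos hin) fun hin => ?_
    refine ⟨n - 1 - i, by omega, ?_⟩
    rw [aTuple, if_neg hin, ← hs, List.getD_eq_getElem _ _ (by omega)]
  · rintro (rfl | ⟨i, hi, rfl⟩)
    · exact ⟨n, by grind, if_pos rfl⟩
    · refine ⟨n - 1 - i, by grind, ?_⟩
      rw [aTuple, if_neg (by omega), ← hs, List.getD_eq_getElem _ _ (by omega)]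
      congr 1
      omega

/-- The bottom row of the fillings counted by `c_{ã|b}`, extended by zero outside the columns
`2, …, n`. -/
noncomputable def bottomRow (n atil b : ℕ) : ℕ → ℕ := Set.indicator (Set.Icc 2 n) (aTuple n atil b)

lemma bottomRow_of_mem {i : ℕ} (hi : i ∈ Icc 2 n) : bottomRow n atil b i = aTuple n atil b i :=
  Set.indicator_of_mem (by simpa using hi) _

lemma image_bottomRow (ha : atil ∈ Icc 1 n) (hb : b ∈ Icc 1 n) (hab : b ≠ atil) :
    (Icc 2 n).image (bottomRow n atil b) = (Icc 1 n).erase atil := by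
  rw [← image_aTuple ha hb hab]
  exact image_congr fun i hi => bottomRow_of_mem (by simpa using hi)

lemma bottomRow_mem_rows (ha : atil ∈ Icc 1 n) (hb : b ∈ Icc 1 n) (hab : b ≠ atil) :
    bottomRow n atil b ∈ rows n := by
  have himage := image_bottomRow ha hb hab
  refine mem_rows.2 ⟨mem_labelings.2 ⟨fun i hi => ?_, fun i hi => ?_⟩, ?_⟩
  · exact mem_of_mem_erase (himage ▸ mem_image_of_mem _ hi)
  · exact Set.indicator_of_notMem (by simpa using hi) _
  · rw [← coe_Icc, ← card_image_iff, himage, card_erase_of_mem ha, Nat.card_Icc, Nat.card_Icc]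
    omega

lemma bottomRow_eq_update (hj : 1 ≤ j) (hjn : j + 1 ≤ n) (hb : b ∈ Icc 1 n) (hbj : b ≠ j)
    (hbj' : b ≠ j + 1) {q : ℕ} (hq : q ∈ Icc 2 n) (hqj : bottomRow n (j + 1) b q = j) :
    bottomRow n j b = Function.update (bottomRow n (j + 1) b) q (j + 1) := by
  have hmem : bottomRow n (j + 1) b ∈ rows n := bottomRow_mem_rows (by grind) hb hbj'
  have himage := image_bottomRow (atil := j + 1) (by grind) hb hbj'
  funext i
  by_cases hi : i ∈ Icc 2 n
  · have hmiss : bottomRow n (j + 1) b i ≠ j + 1 :=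
      ne_of_mem_erase (himage ▸ mem_image_of_mem _ hi)
    rw [bottomRow_of_mem hi, aTuple_eq_swap_comp hj hjn hbj hbj', Function.comp_apply,
      ← bottomRow_of_mem hi]
    obtain rfl | hiq := eq_or_ne i q
    · rw [Function.update_self, hqj, Equiv.swap_apply_left]
    · have hij : bottomRow n (j + 1) b i ≠ j := fun h =>
        hiq (injOn_of_mem_rows hmem (by simpa using hi) (by simpa using hq) (h.trans hqj.symm))
      rw [Function.update_of_ne hiq, Equiv.swap_apply_of_ne_of_ne hij hmiss]
  · rw [Function.update_of_ne (ne_of_mem_of_not_mem hq hi).symm, bottomRow, bottomRow,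
      Set.indicator_of_notMem (by simpa using hi), Set.indicator_of_notMem (by simpa using hi)]

lemma cBar_shape {p m : ℕ} (hn : 2 ≤ n) (hm : 1 ≤ m) (k : ℕ → ℕ) :
    cBar n (shape n p m) atil b k = stackSum n p m (bottomRow n atil b) fun i => (k i : ℤ) :=
  cCoef_shape hn hm _ fun _ _ => rfl

lemma cBar_shape_add_one {p m : ℕ} (hn : 2 ≤ n) (hm : 1 ≤ m) (ha : atil ∈ Icc 1 n)
    (hb : b ∈ Icc 1 n) (hab : b ≠ atil) (k : ℕ → ℕ) :
    cBar n (shape n p m) atil b (fun i => if i = atil then k i else k i + 1) =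
      stackSum n p m (bottomRow n atil b)
        ((fun i => (k i : ℤ)) + content (Icc 2 n) (bottomRow n atil b)) := by
  refine cCoef_shape hn hm _ fun i hi => ?_
  rw [Pi.add_apply, content_of_mem_rows (bottomRow_mem_rows ha hb hab), image_bottomRow ha hb hab]
  simp only [mem_erase, hi, and_true]
  split_ifs <;> simp_all

end BottomRow

end CO

open CO in
theorem cbar_difference_general (n m₁ m₂ : ℕ) (hm₂ : 1 ≤ m₂) (j b : ℕ) (hj : 1 ≤ j)
    (hjn : j + 1 ≤ n) (hb : b ∈ Icc 1 n) (hbj : b ≠ j) (hbj' : b ≠ j + 1) (k : ℕ → ℕ) :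
    cBar n (shape n m₁ (m₂ + 1)) j b (fun i => if i = j then k i else k i + 1)
      = cBar n (shape n m₁ (m₂ + 1)) (j + 1) b (fun i => if i = j + 1 then k i else k i + 1) -
          (1 - Polynomial.X ^ m₂) * cBar n (shape n m₁ m₂) (j + 1) b k := by
  have hn : 2 ≤ n := by omega
  have hmem : bottomRow n (j + 1) b ∈ rows n := bottomRow_mem_rows (by grind) hb hbj'
  have himage := image_bottomRow (atil := j + 1) (by grind) hb hbj'
  obtain ⟨q, hq, hqj⟩ : ∃ q ∈ Icc 2 n, bottomRow n (j + 1) b q = j := by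
    rw [← mem_image, himage]
    grind
  have hqn : q < n := by
    refine (mem_Icc.1 hq).2.lt_of_ne fun h => hbj ?_
    rw [← hqj, bottomRow_of_mem hq, aTuple, if_pos h]
  have hmiss : j + 1 ∉ bottomRow n (j + 1) b '' Set.Icc 2 n := by
    rw [← coe_Icc, ← coe_image, himage]
    simp
  rw [cBar_shape_add_one hn (by omega) (by grind) hb hbj,
    cBar_shape_add_one hn (by omega) (by grind) hb hbj', cBar_shape hn hm₂,
    bottomRow_eq_update hj hjn hb hbj hbj' hq hqj]
  simpa only [hqj] using
    stackSum_update_succ hm₂ (mem_Icc.1 hq).1 hqn hmem (by rwa [hqj]) (by omega) _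

open CO in
/-- Subtracting the recurrences for consecutive `j`:
`c^{λ⁺}_{j|1}(…, k_j, …) = c^{λ⁺}_{j+1|1}(…, k_{j+1}, …) - (1 - q^{m₂}) c^λ_{j+1|1}(k)`,
with `λ = (0, m₂, …, m₂, m₁+m₂)` and `λ⁺ = (0, m₂+1, …, m₂+1, m₁+m₂+1)`. -/
theorem cbar_difference (n : ℕ) (hn : 3 ≤ n) (m₁ m₂ : ℕ) (hm₂ : 1 ≤ m₂)
    (lam lamP : ℕ → ℕ)
    (hlam : lam = fun i => if i = n then m₁ + m₂ else if 2 ≤ i then m₂ else 0)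
    (hlamP : lamP = fun i => if i = n then m₁ + m₂ + 1 else if 2 ≤ i then m₂ + 1 else 0)
    (j : ℕ) (hj1 : 2 ≤ j) (hj2 : j ≤ n - 1) (k : ℕ → ℕ) :
    cBar n lamP j 1 (fun i => if i = j then k i else k i + 1)
      = cBar n lamP (j + 1) 1 (fun i => if i = j + 1 then k i else k i + 1) -
          (1 - Polynomial.X ^ m₂) * cBar n lam (j + 1) 1 k := by
  subst hlam hlamP
  exact cbar_difference_general n m₁ m₂ hm₂ j 1 (by omega) (by omega) (by grind) (by omega)
    (by omega) k
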